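/- Let a₃₀, a₂₁, a₁₂ be real numbers with a₃₀ ≠ 0 and a₂₁² − a₁₂a₃₀ ≠ 0, and define λ₁(p) = −(a₃₀ + 3a₂₁p + 2a₁₂p²) and λ₂(p) = a₃₀ + 4a₂₁p + 3a₁₂p². Then: (i) λ₁(0)·λ₂(0) = −a₃₀² < 0; and (ii) for every real root p of a₁₂p² + 2a₂₁p + a₃₀ = 0, one has λ₁(p) = a₃₀ + a₂₁p, λ₂(p) = −2(a₃₀ + a₂₁p), a₃₀ + a₂₁p ≠ 0, and hence λ₁(p)·λ₂(p) = −2(a₃₀ + a₂₁p)² < 0. Consequently every singular point of the associated Lie–Cartan field along the projective line has two real nonzero eigenvalues of opposite signs (a hyperbolic saddle). -/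

import Mathlib

/-!
Put `q = a₁₂p² + 2a₂₁p + a₃₀` and `r = a₃₀ + a₂₁p`. Then `λ₁ = r - 2q`, `λ₂ = 3q - 2r` and
`r² = a₃₀q + (a₂₁² - a₁₂a₃₀)p²`. At a root of `q` the eigenvalues are therefore `r` and `-2r`,
and `r` can vanish only if `p = 0`, which forces `a₃₀ = 0`, or if `a₂₁² - a₁₂a₃₀ = 0`.
-/

namespace LieCartan

section CommRing

variable {R : Type*} [CommRing R]

/-- The eigenvalue `λ₁(p)` of the linearisation `DX(0, 0, p)` of the Lie–Cartan field, as a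
polynomial in `p` and the third-order Taylor coefficients of `h`. -/
def lambda₁ (a₃₀ a₂₁ a₁₂ p : R) : R :=
  -(a₃₀ + 3 * a₂₁ * p + 2 * a₁₂ * p ^ 2)

/-- The eigenvalue `λ₂(p)` of the linearisation `DX(0, 0, p)` of the Lie–Cartan field, as a
polynomial in `p` and the third-order Taylor coefficients of `h`. -/
def lambda₂ (a₃₀ a₂₁ a₁₂ p : R) : R :=
  a₃₀ + 4 * a₂₁ * p + 3 * a₁₂ * p ^ 2

variable {a₃₀ a₂₁ a₁₂ p : R}

theorem lambda₁_eq_of_root (hp : a₁₂ * p ^ 2 + 2 * a₂₁ * p + a₃₀ = 0) :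
    lambda₁ a₃₀ a₂₁ a₁₂ p = a₃₀ + a₂₁ * p := by
  unfold lambda₁
  linear_combination (-2) * hp

theorem lambda₂_eq_of_root (hp : a₁₂ * p ^ 2 + 2 * a₂₁ * p + a₃₀ = 0) :
    lambda₂ a₃₀ a₂₁ a₁₂ p = -2 * (a₃₀ + a₂₁ * p) := by
  unfold lambda₂
  linear_combination 3 * hp

theorem lambda₁_mul_lambda₂_zero (a₃₀ a₂₁ a₁₂ : R) :
    lambda₁ a₃₀ a₂₁ a₁₂ 0 * lambda₂ a₃₀ a₂₁ a₁₂ 0 = -a₃₀ ^ 2 := by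
  unfold lambda₁ lambda₂
  ring

theorem lambda₁_mul_lambda₂_of_root (hp : a₁₂ * p ^ 2 + 2 * a₂₁ * p + a₃₀ = 0) :
    lambda₁ a₃₀ a₂₁ a₁₂ p * lambda₂ a₃₀ a₂₁ a₁₂ p = -2 * (a₃₀ + a₂₁ * p) ^ 2 := by
  rw [lambda₁_eq_of_root hp, lambda₂_eq_of_root hp]
  ring

theorem sq_add_mul_of_root (hp : a₁₂ * p ^ 2 + 2 * a₂₁ * p + a₃₀ = 0) :
    (a₃₀ + a₂₁ * p) ^ 2 = (a₂₁ ^ 2 - a₁₂ * a₃₀) * p ^ 2 := by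
  linear_combination a₃₀ * hp

theorem ne_zero_of_root (h30 : a₃₀ ≠ 0) (hp : a₁₂ * p ^ 2 + 2 * a₂₁ * p + a₃₀ = 0) : p ≠ 0 := by
  rintro rfl
  exact h30 (by simpa using hp)

theorem add_mul_ne_zero_of_root [NoZeroDivisors R] (h30 : a₃₀ ≠ 0)
    (hd : a₂₁ ^ 2 - a₁₂ * a₃₀ ≠ 0) (hp : a₁₂ * p ^ 2 + 2 * a₂₁ * p + a₃₀ = 0) :
    a₃₀ + a₂₁ * p ≠ 0 := by
  have hsq : (a₃₀ + a₂₁ * p) ^ 2 ≠ 0 := by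
    rw [sq_add_mul_of_root hp]
    exact mul_ne_zero hd (pow_ne_zero 2 (ne_zero_of_root h30 hp))
  exact ne_zero_pow two_ne_zero hsq

end CommRing

section Ordered

variable {R : Type*} [CommRing R] [LinearOrder R] [IsStrictOrderedRing R] {a₃₀ a₂₁ a₁₂ p : R}

theorem lambda₁_mul_lambda₂_neg_of_singular (h30 : a₃₀ ≠ 0) (hd : a₂₁ ^ 2 - a₁₂ * a₃₀ ≠ 0)
    (hp : p * (a₁₂ * p ^ 2 + 2 * a₂₁ * p + a₃₀) = 0) :
    lambda₁ a₃₀ a₂₁ a₁₂ p * lambda₂ a₃₀ a₂₁ a₁₂ p < 0 := by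
  rcases mul_eq_zero.mp hp with rfl | hroot
  · rw [lambda₁_mul_lambda₂_zero]
    exact neg_neg_of_pos (sq_pos_of_ne_zero h30)
  · rw [lambda₁_mul_lambda₂_of_root hroot]
    exact mul_neg_of_neg_of_pos (neg_neg_of_pos two_pos)
      (sq_pos_of_ne_zero (add_mul_ne_zero_of_root h30 hd hroot))

end Ordered

end LieCartan

open LieCartan in
theorem stmt_8_general {R : Type*} [CommRing R] [LinearOrder R] [IsStrictOrderedRing R]
    {a₃₀ a₂₁ a₁₂ : R} (h30 : a₃₀ ≠ 0) (hd : a₂₁ ^ 2 - a₁₂ * a₃₀ ≠ 0) :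
    (lambda₁ a₃₀ a₂₁ a₁₂ 0 * lambda₂ a₃₀ a₂₁ a₁₂ 0 = -a₃₀ ^ 2 ∧
      lambda₁ a₃₀ a₂₁ a₁₂ 0 * lambda₂ a₃₀ a₂₁ a₁₂ 0 < 0) ∧
    ∀ p : R, a₁₂ * p ^ 2 + 2 * a₂₁ * p + a₃₀ = 0 →
      lambda₁ a₃₀ a₂₁ a₁₂ p = a₃₀ + a₂₁ * p ∧
      lambda₂ a₃₀ a₂₁ a₁₂ p = -2 * (a₃₀ + a₂₁ * p) ∧
      a₃₀ + a₂₁ * p ≠ 0 ∧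
      lambda₁ a₃₀ a₂₁ a₁₂ p * lambda₂ a₃₀ a₂₁ a₁₂ p = -2 * (a₃₀ + a₂₁ * p) ^ 2 ∧
      lambda₁ a₃₀ a₂₁ a₁₂ p * lambda₂ a₃₀ a₂₁ a₁₂ p < 0 :=
  ⟨⟨lambda₁_mul_lambda₂_zero a₃₀ a₂₁ a₁₂,
    lambda₁_mul_lambda₂_neg_of_singular h30 hd (zero_mul _)⟩,
  fun p hp ↦ ⟨lambda₁_eq_of_root hp, lambda₂_eq_of_root hp, add_mul_ne_zero_of_root h30 hd hp,
    lambda₁_mul_lambda₂_of_root hp,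
    lambda₁_mul_lambda₂_neg_of_singular h30 hd (mul_eq_zero_of_right p hp)⟩⟩

/-- the nonzero eigenvalues `λ₁, λ₂` of the Lie–Cartan field at each
singularity along the projective line have opposite signs (hyperbolic saddles). -/
theorem stmt_8 (a30 a21 a12 : ℝ) (h30 : a30 ≠ 0) (hd : a21 ^ 2 - a12 * a30 ≠ 0)
    (lam1 lam2 : ℝ → ℝ)
    (h1 : lam1 = fun p => -(a30 + 3 * a21 * p + 2 * a12 * p ^ 2))
    (h2 : lam2 = fun p => a30 + 4 * a21 * p + 3 * a12 * p ^ 2) :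
    (lam1 0 * lam2 0 = -a30 ^ 2 ∧ lam1 0 * lam2 0 < 0) ∧
    ∀ p : ℝ, a12 * p ^ 2 + 2 * a21 * p + a30 = 0 →
      lam1 p = a30 + a21 * p ∧ lam2 p = -2 * (a30 + a21 * p) ∧
      a30 + a21 * p ≠ 0 ∧
      lam1 p * lam2 p = -2 * (a30 + a21 * p) ^ 2 ∧
      lam1 p * lam2 p < 0 := by
  subst h1 h2
  exact stmt_8_general h30 hd
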